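/- Let L be a finite ULD lattice and m a meet-irreducible of L. Then 𝔘_m = {j⁻ : j is a join-irreducible of L and j is a minimal element of {x ∈ L : x ≰ m}}. -/

import Mathlib

open Classical

section CFGdefs

variable {V : Type*}

/-- Out-degree of a vertex in a directed multigraph with edge multiplicities `E`. -/
noncomputable def outDeg (E : V → V → ℕ) (v : V) : ℕ := ∑ᶠ u, E v u

/-- A vertex is a sink if all its outgoing edges are loops. -/
def IsSink (E : V → V → ℕ) (v : V) : Prop := outDeg E v = E v v

/-- A vertex is firable in configuration `c`. -/
def Firable (E : V → V → ℕ) (c : V → ℕ) (v : V) : Prop :=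
  ¬ IsSink E v ∧ outDeg E v ≤ c v

/-- The result of firing vertex `v` in configuration `c`. -/
noncomputable def fire (E : V → V → ℕ) (c : V → ℕ) (v : V) : V → ℕ :=
  fun u => if u = v then c v - outDeg E v + E v v else c u + E v u

/-- The configuration obtained by firing a list of vertices in order. -/
noncomputable def fireList (E : V → V → ℕ) : (V → ℕ) → List V → (V → ℕ)
  | c, [] => c
  | c, v :: l => fireList E (fire E c v) l

/-- A list of vertices is a valid firing sequence from `c`. -/
def ValidSeq (E : V → V → ℕ) : (V → ℕ) → List V → Prop
  | _, [] => True
  | c, v :: l => Firable E c v ∧ ValidSeq E (fire E c v) l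

/-- `c'` is reachable from `c` by a finite sequence of firings. -/
def Reaches (E : V → V → ℕ) (c c' : V → ℕ) : Prop :=
  ∃ l : List V, ValidSeq E c l ∧ fireList E c l = c'

/-- A configuration with no firable vertex. -/
def FixedPt (E : V → V → ℕ) (c : V → ℕ) : Prop := ∀ v, ¬ Firable E c v

/-- The chip firing game `CFG(G,O)` reaches a unique fixed point. -/
def ReachesUFP (E : V → V → ℕ) (O : V → ℕ) : Prop :=
  ∃ fp : V → ℕ, Reaches E O fp ∧ FixedPt E fp ∧ ∀ c, Reaches E O c → Reaches E c fp

/-- The game is simple: in every firing sequence from `O` to the fixed point,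
each vertex fires at most once. -/
def SimpleCFG (E : V → V → ℕ) (O : V → ℕ) : Prop :=
  ∀ l : List V, ValidSeq E O l → FixedPt E (fireList E O l) → l.Nodup

/-- Single firing step from `c` to `c'` by firing vertex `v`. -/
def FireStep (E : V → V → ℕ) (c : V → ℕ) (v : V) (c' : V → ℕ) : Prop :=
  Firable E c v ∧ fire E c v = c'

/-- The partial order `L` is order-isomorphic to the configuration space of
`CFG(G,O)` ordered by reachability. -/
def Generates (E : V → V → ℕ) (O : V → ℕ) (L : Type*) [PartialOrder L] : Prop :=
  ∃ f : L ≃ {c : V → ℕ // Reaches E O c},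
    ∀ a b : L, a ≤ b ↔ Reaches E (f a).val (f b).val

/-- The support graph is connected (as an undirected graph). -/
def ConnectedG (E : V → V → ℕ) : Prop :=
  ∀ u v : V, Relation.ReflTransGen (fun a b => 0 < E a b ∨ 0 < E b a) u v

/-- The support graph together with its initial data is an Abelian Sandpile Model. -/
def IsASM (E : V → V → ℕ) : Prop :=
  ConnectedG E ∧ ∃ s : V, IsSink E s ∧ (∀ v, IsSink E v → v = s) ∧
    ∀ v₁ v₂ : V, v₁ ≠ v₂ → v₁ ≠ s → v₂ ≠ s → E v₁ v₂ = E v₂ v₁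

/-- The directed multigraph has no directed cycle. -/
def AcyclicG (E : V → V → ℕ) : Prop :=
  ∀ v : V, ¬ Relation.TransGen (fun a b => 0 < E a b) v v

end CFGdefs

/-- `L` is generated by some chip firing game reaching a unique fixed point. -/
def MemLCFG (L : Type*) [PartialOrder L] : Prop :=
  ∃ (V : Type) (_ : Finite V) (E : V → V → ℕ) (O : V → ℕ),
    ReachesUFP E O ∧ Generates E O L

/-- `L` is generated by some Abelian Sandpile Model reaching a unique fixed point. -/
def MemLASM (L : Type*) [PartialOrder L] : Prop :=
  ∃ (V : Type) (_ : Finite V) (E : V → V → ℕ) (O : V → ℕ),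
    IsASM E ∧ ReachesUFP E O ∧ Generates E O L

section Latticedefs

variable {L : Type*} [Lattice L]

/-- `m` is meet-irreducible: it has exactly one upper cover. -/
def MeetIrred (m : L) : Prop := ∃! y, m ⋖ y

/-- `j` is join-irreducible: it has exactly one lower cover. -/
def JoinIrred (j : L) : Prop := ∃! y, y ⋖ j

/-- The set `M_x \ M_y` of meet-irreducibles above `x` but not above `y`. -/
def MsetDiff (x y : L) : Set L := {m | MeetIrred m ∧ x ≤ m ∧ ¬ y ≤ m}

/-- The set `M \ M_a` of meet-irreducibles not above `a`. -/
def MnotAbove (a : L) : Set L := {m | MeetIrred m ∧ ¬ a ≤ m}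

/-- `x⁺`: the join of all upper covers of `x`. -/
noncomputable def uplus [Fintype L] [OrderBot L] (x : L) : L :=
  Finset.univ.sup (fun y => if x ⋖ y then y else ⊥)

/-- `L` is upper locally distributive: for every `x ≠ ⊤` the interval `[x, x⁺]`
is isomorphic to a Boolean lattice (a hypercube). -/
def IsULD (L : Type*) [Lattice L] [Fintype L] [BoundedOrder L] : Prop :=
  ∀ x : L, x ≠ ⊤ → ∃ n : ℕ, Nonempty (↥(Set.Icc x (uplus x)) ≃o Set (Fin n))

/-- `𝔘_m`: the minimal elements of `{x : ∃ y, x ⋖ y and 𝔪(x,y) = m}`. -/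
def Uset (m : L) : Set L :=
  {x | Minimal (fun z => ∃ y, z ⋖ y ∧ MsetDiff z y = {m}) x}

/-- `𝔏_m`: the maximal elements of `{x : a ≰ x for every a ∈ 𝔘_m}`. -/
def Lset (m : L) : Set L :=
  {x | Maximal (fun z => ∀ a ∈ Uset m, ¬ a ≤ z) x}

/-- `(w, e)` is a (non-negative integer) solution of the system `E(m)`. -/
def SolvesE [OrderBot L] (m : L) (w : ℕ) (e : L → ℕ) : Prop :=
  (Uset m = {(⊥ : L)} → 1 ≤ w) ∧
  (Uset m ≠ {(⊥ : L)} →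
    (∀ a ∈ Lset m, (∑ᶠ x ∈ MnotAbove a, e x) < w) ∧
    (∀ a ∈ Uset m, w ≤ ∑ᶠ x ∈ MnotAbove a, e x))

/-- The system `E(m)` has a non-negative integer solution. -/
def HasSolE [OrderBot L] (m : L) : Prop := ∃ w e, SolvesE m w e

/-- The variable `e_{x,m}` occurs in the system `𝔈(m)`. -/
def VarOccurs [OrderBot L] (x m : L) : Prop :=
  MeetIrred m ∧ Uset m ≠ {(⊥ : L)} ∧ ∃ a ∈ Uset m ∪ Lset m, x ∈ MnotAbove a

/-- `(W, Ee)` is a non-negative integer solution of the system `Ω`. -/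
def SolvesOmega [OrderBot L] (W : L → ℕ) (Ee : L → L → ℕ) : Prop :=
  (∀ m : L, MeetIrred m → SolvesE m (W m) (fun x => Ee x m)) ∧
  (∀ m₁ m₂ : L, m₁ ≠ m₂ → VarOccurs m₁ m₂ → VarOccurs m₂ m₁ → Ee m₁ m₂ = Ee m₂ m₁)

/-- The edge relation of the directed graph `𝒢` on the meet-irreducibles. -/
def Gedge (m₁ m₂ : L) : Prop :=
  MeetIrred m₁ ∧ MeetIrred m₂ ∧ ∃ a ∈ Uset m₂, m₁ ∈ MnotAbove a

end Latticedefs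

/-- The system `Ω` has a non-negative integer solution. -/
def HasSolOmega (L : Type*) [Lattice L] [OrderBot L] : Prop :=
  ∃ W Ee, SolvesOmega (L := L) W Ee

/-- The directed graph `𝒢` on the meet-irreducibles is acyclic. -/
def GAcyclic (L : Type*) [Lattice L] : Prop :=
  ∀ m : L, ¬ Relation.TransGen (Gedge (L := L)) m m

section ULDlemmas

variable {L : Type*} [Lattice L]

/-- Meet-irreducibles separate points of a finite lattice. -/
lemma exists_meetIrred_of_not_le [Finite L] {y z : L} (h : ¬ y ≤ z) :
    ∃ m, MeetIrred m ∧ z ≤ m ∧ ¬ y ≤ m := by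
  obtain ⟨m, hzm, hm⟩ := Set.Finite.exists_le_maximal (Set.toFinite {w : L | ¬ y ≤ w}) h
  have key : ∀ w, m < w → m ⊔ y ≤ w := fun w hw =>
    sup_le hw.le (by_contra fun hyw => hw.not_ge (hm.2 hyw hw.le))
  have hcov : m ⋖ m ⊔ y :=
    ⟨left_lt_sup.2 hm.1, fun w hmw hw => hw.not_ge (key w hmw)⟩
  exact ⟨m, ⟨m ⊔ y, hcov, fun w hw =>
    (hw.eq_or_eq hcov.le (key w hw.lt)).resolve_left hcov.lt.ne' |>.symm⟩, hzm, hm.1⟩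

lemma inf_eq_of_covBy_of_ne {x y a : L} (hy : x ⋖ y) (ha : x ⋖ a) (hne : y ≠ a) :
    y ⊓ a = x := by
  refine (hy.eq_or_eq (le_inf hy.le ha.le) inf_le_left).resolve_right fun h => ?_
  exact (ha.eq_or_eq hy.le (inf_eq_left.1 h)).elim hy.lt.ne' hne

lemma MeetIrred.eq_of_le_of_not_le [Finite L] {m y n : L} (hm : MeetIrred m) (hy : m ⋖ y) (hn : m ≤ n)
    (hyn : ¬ y ≤ n) : m = n := by
  by_contra hne
  obtain ⟨c, hc, hcn⟩ := exists_covBy_le_of_lt (lt_of_le_of_ne hn hne)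
  exact hyn (hm.unique hy hc ▸ hcn)

variable [Fintype L] [BoundedOrder L]

lemma le_uplus {x y : L} (h : x ⋖ y) : y ≤ uplus x := by
  have := Finset.le_sup (f := fun y => if x ⋖ y then y else ⊥) (Finset.mem_univ y)
  simpa [uplus, h] using this

lemma IsULD.inf_sup_le (hULD : IsULD L) {x u v w : L} (hx : x ≠ ⊤)
    (hu : u ∈ Set.Icc x (uplus x)) (hv : v ∈ Set.Icc x (uplus x))
    (hw : w ∈ Set.Icc x (uplus x)) : u ⊓ (v ⊔ w) ≤ (u ⊓ v) ⊔ (u ⊓ w) := by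
  obtain ⟨n, ⟨f⟩⟩ := hULD x hx
  have huv : u ⊓ v ∈ Set.Icc x (uplus x) := ⟨le_inf hu.1 hv.1, inf_le_left.trans hu.2⟩
  have huw : u ⊓ w ∈ Set.Icc x (uplus x) := ⟨le_inf hu.1 hw.1, inf_le_left.trans hu.2⟩
  have hl : u ⊓ (v ⊔ w) ∈ Set.Icc x (uplus x) :=
    ⟨le_inf hu.1 (hv.1.trans le_sup_left), inf_le_left.trans hu.2⟩
  have hr : (u ⊓ v) ⊔ (u ⊓ w) ∈ Set.Icc x (uplus x) :=
    ⟨huv.1.trans le_sup_left, sup_le huv.2 huw.2⟩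
  have sup_le' : v ⊔ w ≤ (f.symm (f ⟨v, hv⟩ ⊔ f ⟨w, hw⟩) : L) := by
    refine sup_le ?_ ?_
    · exact (f.le_symm_apply (x := ⟨v, hv⟩)).2 le_sup_left
    · exact (f.le_symm_apply (x := ⟨w, hw⟩)).2 le_sup_right
  have inf_le' : ∀ (b : L) (hb : b ∈ Set.Icc x (uplus x)) (hub : u ⊓ b ∈ Set.Icc x (uplus x)),
      f ⟨u, hu⟩ ⊓ f ⟨b, hb⟩ ≤ f ⟨u ⊓ b, hub⟩ := by
    intro b hb hub
    refine f.symm_apply_le.1 ?_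
    refine Subtype.coe_le_coe.1 (le_inf ?_ ?_)
    · exact (f.symm_apply_le (x := ⟨u, hu⟩)).2 inf_le_left
    · exact (f.symm_apply_le (x := ⟨b, hb⟩)).2 inf_le_right
  have h1 : f ⟨u ⊓ (v ⊔ w), hl⟩ ≤ f ⟨u, hu⟩ ⊓ (f ⟨v, hv⟩ ⊔ f ⟨w, hw⟩) := by
    refine le_inf ?_ ?_
    · exact f.le_iff_le.2 (inf_le_left : u ⊓ (v ⊔ w) ≤ u)
    · exact (f.le_symm_apply).1
        ((inf_le_right : u ⊓ (v ⊔ w) ≤ v ⊔ w).trans sup_le')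
  have h2 : f ⟨u, hu⟩ ⊓ (f ⟨v, hv⟩ ⊔ f ⟨w, hw⟩) ≤ f ⟨(u ⊓ v) ⊔ (u ⊓ w), hr⟩ := by
    rw [inf_sup_left]
    refine sup_le ((inf_le' v hv huv).trans ?_) ((inf_le' w hw huw).trans ?_)
    · exact f.le_iff_le.2 (le_sup_left : u ⊓ v ≤ (u ⊓ v) ⊔ (u ⊓ w))
    · exact f.le_iff_le.2 (le_sup_right : u ⊓ w ≤ (u ⊓ v) ⊔ (u ⊓ w))
  exact f.le_iff_le.1 (h1.trans h2)

lemma CovBy.mem_Icc_uplus {x y : L} (h : x ⋖ y) : y ∈ Set.Icc x (uplus x) :=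
  ⟨h.le, le_uplus h⟩

/-- A finite ULD lattice is upper semimodular. -/
lemma IsULD.covBy_sup (hULD : IsULD L) {x y a : L} (hy : x ⋖ y) (ha : x ⋖ a) (hne : y ≠ a) :
    a ⋖ a ⊔ y := by
  have hya := inf_eq_of_covBy_of_ne hy ha hne
  refine ⟨left_lt_sup.2 fun h => hy.lt.ne' (by rwa [inf_eq_left.2 h] at hya), fun z haz hz => ?_⟩
  have hzI : z ∈ Set.Icc x (uplus x) :=
    ⟨ha.le.trans haz.le, hz.le.trans (sup_le (le_uplus ha) (le_uplus hy))⟩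
  have hd := hULD.inf_sup_le (hy.lt.ne_top) hzI ha.mem_Icc_uplus hy.mem_Icc_uplus
  rw [inf_eq_left.2 hz.le] at hd
  rcases hy.eq_or_eq (le_inf hzI.1 hy.le) inf_le_right with h | h
  · rw [h] at hd
    exact haz.not_ge (hd.trans (sup_le inf_le_right ha.le))
  · exact hz.not_ge (sup_le haz.le (inf_eq_right.1 h))

lemma IsULD.not_le_sup (hULD : IsULD L) {x y a b : L} (hy : x ⋖ y) (ha : x ⋖ a) (hb : x ⋖ b)
    (hya : y ≠ a) (hyb : y ≠ b) : ¬ y ≤ a ⊔ b := by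
  intro h
  have hd := hULD.inf_sup_le hy.lt.ne_top hy.mem_Icc_uplus ha.mem_Icc_uplus hb.mem_Icc_uplus
  rw [inf_eq_left.2 h, inf_eq_of_covBy_of_ne hy ha hya, inf_eq_of_covBy_of_ne hy hb hyb,
    sup_idem] at hd
  exact hy.lt.not_ge hd

/-- In a finite ULD lattice, a cover is separated by at most one meet-irreducible. -/
lemma IsULD.subsingleton_msetDiff (hULD : IsULD L) (x : L) :
    ∀ y, x ⋖ y → (MsetDiff x y).Subsingleton := by
  induction x using WellFoundedGT.induction with
  | ind x ih =>
    rintro y hy m ⟨hm, hxm, hym⟩ n ⟨hn, hxn, hyn⟩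
    rcases hxm.eq_or_lt with rfl | hxm
    · exact hm.eq_of_le_of_not_le hy hxn hyn
    rcases hxn.eq_or_lt with rfl | hxn
    · exact (hn.eq_of_le_of_not_le hy hxm.le hym).symm
    obtain ⟨a, ha, ham⟩ := exists_covBy_le_of_lt hxm
    obtain ⟨b, hb, hbn⟩ := exists_covBy_le_of_lt hxn
    have hya : y ≠ a := fun h => hym (h ▸ ham)
    have hyb : y ≠ b := fun h => hyn (h ▸ hbn)
    obtain ⟨k, hk, habk, hyk⟩ :=
      exists_meetIrred_of_not_le (hULD.not_le_sup hy ha hb hya hyb)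
    have hmk : m = k := ih a ha.lt _ (hULD.covBy_sup hy ha hya)
      ⟨hm, ham, fun h => hym (le_sup_right.trans h)⟩
      ⟨hk, le_sup_left.trans habk, fun h => hyk (le_sup_right.trans h)⟩
    have hnk : n = k := ih b hb.lt _ (hULD.covBy_sup hy hb hyb)
      ⟨hn, hbn, fun h => hyn (le_sup_right.trans h)⟩
      ⟨hk, le_sup_right.trans habk, fun h => hyk (le_sup_right.trans h)⟩
    exact hmk.trans hnk.symm

lemma IsULD.msetDiff_eq_singleton (hULD : IsULD L) {x y m : L} (hy : x ⋖ y)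
    (hm : m ∈ MsetDiff x y) : MsetDiff x y = {m} :=
  (hULD.subsingleton_msetDiff x y hy).eq_singleton_of_mem hm

lemma joinIrred_of_minimal_not_le {m j : L} (hj : Minimal (fun z => ¬ z ≤ m) j) :
    JoinIrred j := by
  have hlt : ∀ z, z < j → z ≤ m := fun z hz =>
    by_contra fun h => hz.not_ge (hj.2 h hz.le)
  have hbot : ⊥ < j := bot_lt_iff_ne_bot.2 fun h => hj.1 (h ▸ bot_le)
  obtain ⟨z, -, hz⟩ := exists_le_covBy_of_lt hbot
  refine ⟨z, hz, fun w hw => by_contra fun hne => hj.1 ?_⟩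
  rw [← WCovBy.sup_eq (CovBy.wcovBy hw) hz.wcovBy hne]
  exact sup_le (hlt w hw.lt) (hlt z hz.lt)

end ULDlemmas

/-- in a finite ULD lattice, for every meet-irreducible `m`,
`𝔘_m = {j⁻ : j join-irreducible and j minimal in {x : x ≰ m}}`. -/
theorem stmt5 {L : Type*} [Lattice L] [Fintype L] [BoundedOrder L]
    (hULD : IsULD L) (m : L) (hm : MeetIrred m) :
    Uset m = {x : L | ∃ j : L, JoinIrred j ∧ Minimal (fun z => ¬ z ≤ m) j ∧ x ⋖ j} := by
  ext x
  constructor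
  · rintro ⟨⟨y, hxy, hd⟩, hmin⟩
    obtain ⟨-, hxm, hym⟩ : m ∈ MsetDiff x y := hd ▸ rfl
    obtain ⟨j, hjy, hj⟩ := Set.Finite.exists_le_minimal (Set.toFinite {w : L | ¬ w ≤ m}) hym
    have hJ : JoinIrred j := joinIrred_of_minimal_not_le hj
    obtain ⟨z, hz, -⟩ := id hJ
    have hzm : z ≤ m := by_contra fun h => hz.lt.not_ge (hj.2 h hz.le)
    have hzx : z ≤ x := by
      rcases hxy.eq_or_eq le_sup_left (sup_le hxy.le (hz.le.trans hjy)) with h | h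
      · exact sup_eq_left.1 h
      · exact absurd (h ▸ sup_le hxm hzm) hym
    have hxz : x ≤ z := hmin ⟨j, hz, hULD.msetDiff_eq_singleton hz ⟨hm, hzm, hj.1⟩⟩ hzx
    exact ⟨j, hJ, hj, le_antisymm hxz hzx ▸ hz⟩
  · rintro ⟨j, -, hj, hxj⟩
    have hxm : x ≤ m := by_contra fun h => hxj.lt.not_ge (hj.2 h hxj.le)
    refine ⟨⟨j, hxj, hULD.msetDiff_eq_singleton hxj ⟨hm, hxm, hj.1⟩⟩, ?_⟩
    rintro z ⟨y, hzy, hd⟩ hzx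
    obtain ⟨-, -, hym⟩ : m ∈ MsetDiff z y := hd ▸ rfl
    have hyj : y ≤ j := by
      by_contra h
      obtain ⟨k, hk, hjk, hyk⟩ := exists_meetIrred_of_not_le h
      have hkm : k ∈ MsetDiff z y := ⟨hk, hzx.trans (hxj.le.trans hjk), hyk⟩
      rw [hd] at hkm
      exact hj.1 (hkm ▸ hjk)
    obtain rfl : y = j := le_antisymm hyj (hj.2 hym hyj)
    exact ((hzy.eq_or_eq hzx hxj.le).resolve_right hxj.lt.ne).le
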